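/- Let T and S be bounded linear operators on H each admitting an A-adjoint. Then ω_A(T+S) ≤ sqrt( ω_A(T)² + ω_A(S)² + (1/2) · ‖T^{♯_A} T + S S^{♯_A}‖_A + ω_A(ST) ). -/

import Mathlib

/-!
For a unit vector `x` of the seminorm `‖·‖_A`, the square of `|⟨T x, x⟩_A| + |⟨S x, x⟩_A|` has
cross term `2 |⟨T x, x⟩_A| |⟨x, S^♯ x⟩_A|`, which Buzano's inequality bounds by
`‖T x‖_A ‖S^♯ x‖_A + |⟨T x, S^♯ x⟩_A|`. The last summand is `|⟨S T x, x⟩_A|`, and by the AM-GM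
inequality the first one is at most half of
`‖T x‖_A² + ‖S^♯ x‖_A² = ⟨(T^♯ T + S S^♯) x, x⟩_A ≤ ‖(T^♯ T + S S^♯) x‖_A`.

Passing to suprema requires them to be finite. This is Krein's theorem: if `P` is symmetric for
`⟨·, ·⟩_A`, then `k ↦ ‖P ^ k x‖_A / ‖x‖_A` satisfies `b k ^ 2 ≤ b (2 * k)` and grows at most like
`‖P‖ ^ k`, so that `‖P x‖_A ≤ ‖P‖ ‖x‖_A`. For an operator `T` with an `A`-adjoint `X` it is applied
to `P = X T`.
-/

noncomputable section

open ContinuousLinearMap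

variable {H : Type*} [NormedAddCommGroup H] [InnerProductSpace ℂ H] [CompleteSpace H]

/-- The semi-inner product induced by the positive operator `A`: `⟨x, y⟩_A := ⟨A x, y⟩`. -/
def innA (A : H →L[ℂ] H) (x y : H) : ℂ := inner ℂ (A x) y

/-- The seminorm induced by `A`: `‖x‖_A := ⟨x, x⟩_A ^ (1/2)`. -/
def vnormA (A : H →L[ℂ] H) (x : H) : ℝ := Real.sqrt (innA A x x).re

/-- The `A`-operator seminorm: `‖T‖_A := sup {‖T x‖_A : ‖x‖_A = 1}`. -/
def opNormA (A T : H →L[ℂ] H) : ℝ :=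
  sSup {c : ℝ | ∃ x : H, vnormA A x = 1 ∧ c = vnormA A (T x)}

/-- The `A`-numerical radius: `ω_A(T) := sup {|⟨T x, x⟩_A| : ‖x‖_A = 1}`. -/
def wA (A T : H →L[ℂ] H) : ℝ :=
  sSup {c : ℝ | ∃ x : H, vnormA A x = 1 ∧ c = ‖innA A (T x) x‖}

/-- `T` admits an `A`-adjoint: there is a bounded operator `X` with `A X = T* A`. -/
def HasAAdjoint (A T : H →L[ℂ] H) : Prop :=
  ∃ X : H →L[ℂ] H, A ∘L X = adjoint T ∘L A

/-- `X` is the reduced `A`-adjoint `T^{♯_A}` of `T`: it solves `A X = T* A` and its range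
is contained in the closure of the range of `A`. -/
def IsReducedAAdjoint (A T X : H →L[ℂ] H) : Prop :=
  (A ∘L X = adjoint T ∘L A) ∧ ∀ y : H, X y ∈ closure (Set.range A)

open Filter

theorem le_of_frequently_pow_le_const_mul_pow {c d K : ℝ} (hd : 0 ≤ d)
    (h : ∃ᶠ n : ℕ in atTop, c ^ n ≤ K * d ^ n) : c ≤ d := by
  by_contra! hdc
  have hc : 0 < c := hd.trans_lt hdc
  have hlim : Tendsto (fun n : ℕ => K * (d / c) ^ n) atTop (nhds (K * 0)) :=
    (tendsto_pow_atTop_nhds_zero_of_lt_one (by positivity) ((div_lt_one hc).2 hdc)).const_mul K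
  have hsmall : ∀ᶠ n : ℕ in atTop, K * (d / c) ^ n < 1 :=
    hlim.eventually_lt_const (by simp)
  obtain ⟨n, hle, hlt⟩ := (h.and_eventually hsmall).exists
  rw [div_pow, ← mul_div_assoc, div_lt_one (by positivity)] at hlt
  exact hlt.not_ge hle

theorem pow_two_pow_le_of_sq_le {R : Type*} [Semiring R] [PartialOrder R] [IsOrderedRing R]
    {b : ℕ → R} (hb : 0 ≤ b 1) (h : ∀ k, b k ^ 2 ≤ b (2 * k)) (n : ℕ) :
    b 1 ^ 2 ^ n ≤ b (2 ^ n) := by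
  induction n with
  | zero => simp
  | succ n ih =>
    calc b 1 ^ 2 ^ (n + 1) = (b 1 ^ 2 ^ n) ^ 2 := by rw [← pow_mul, pow_succ]
      _ ≤ b (2 ^ n) ^ 2 := pow_le_pow_left₀ (pow_nonneg hb _) ih 2
      _ ≤ b (2 ^ (n + 1)) := (h _).trans_eq (by rw [pow_succ'])

theorem le_of_sq_le_of_le_const_mul_pow {b : ℕ → ℝ} {d K : ℝ} (hd : 0 ≤ d) (hb : 0 ≤ b 1)
    (hsq : ∀ k, b k ^ 2 ≤ b (2 * k)) (hgrowth : ∀ k, b k ≤ K * d ^ k) : b 1 ≤ d :=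
  le_of_frequently_pow_le_const_mul_pow hd <|
    (tendsto_pow_atTop_atTop_of_one_lt one_lt_two).frequently <|
      Frequently.of_forall fun n => (pow_two_pow_le_of_sq_le hb hsq n).trans (hgrowth _)

theorem norm_pow_apply_le {𝕜 E : Type*} [NontriviallyNormedField 𝕜] [SeminormedAddCommGroup E]
    [NormedSpace 𝕜 E] (P : E →L[𝕜] E) (k : ℕ) (x : E) : ‖(P ^ k) x‖ ≤ ‖P‖ ^ k * ‖x‖ := by
  induction k with
  | zero => simp
  | succ k ih =>
    rw [pow_succ', pow_succ', mul_assoc]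
    exact P.le_opNorm_of_le ih

section Buzano

variable {𝕜 E : Type*} [RCLike 𝕜] [SeminormedAddCommGroup E] [InnerProductSpace 𝕜 E]

/-- For a unit vector `e` this is the statement that reflecting in the line `𝕜 e` is isometric. -/
theorem norm_two_mul_inner_smul_sub (e a : E) :
    ‖(2 * inner 𝕜 e a) • e - (‖e‖ ^ 2 : 𝕜) • a‖ = ‖e‖ ^ 2 * ‖a‖ := by
  have hcross : RCLike.re (inner 𝕜 ((2 * inner 𝕜 e a) • e) ((‖e‖ ^ 2 : 𝕜) • a)) =
      2 * ‖e‖ ^ 2 * ‖inner 𝕜 e a‖ ^ 2 := by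
    have hreal : inner 𝕜 ((2 * inner 𝕜 e a) • e) ((‖e‖ ^ 2 : 𝕜) • a) =
        ((2 * ‖e‖ ^ 2 * ‖inner 𝕜 e a‖ ^ 2 : ℝ) : 𝕜) := by
      rw [inner_smul_left, inner_smul_right, map_mul, map_ofNat]
      push_cast
      rw [← RCLike.conj_mul]
      ring
    rw [hreal, RCLike.ofReal_re]
  rw [← sq_eq_sq₀ (norm_nonneg _) (by positivity), norm_sub_sq (𝕜 := 𝕜), hcross]
  simp only [norm_smul, norm_mul, norm_pow, RCLike.norm_ofNat, norm_algebraMap', norm_norm]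
  ring

/-- **Buzano's inequality**. -/
theorem two_mul_norm_inner_mul_norm_inner_le (a b e : E) :
    2 * (‖inner 𝕜 a e‖ * ‖inner 𝕜 e b‖) ≤ ‖e‖ ^ 2 * (‖a‖ * ‖b‖ + ‖inner 𝕜 a b‖) := by
  set r : E := (2 * inner 𝕜 e a) • e - (‖e‖ ^ 2 : 𝕜) • a with hr
  have hdecomp : 2 * (inner 𝕜 a e * inner 𝕜 e b) =
      inner 𝕜 r b + (‖e‖ ^ 2 : 𝕜) * inner 𝕜 a b := by
    simp only [hr, inner_sub_left, inner_smul_left, map_mul, map_pow, inner_conj_symm, map_ofNat,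
      RCLike.conj_ofReal]
    ring
  calc 2 * (‖inner 𝕜 a e‖ * ‖inner 𝕜 e b‖) = ‖2 * (inner 𝕜 a e * inner 𝕜 e b)‖ := by simp
    _ ≤ ‖inner 𝕜 r b‖ + ‖e‖ ^ 2 * ‖inner 𝕜 a b‖ := by
      rw [hdecomp]
      exact (norm_add_le _ _).trans_eq (by simp)
    _ ≤ ‖r‖ * ‖b‖ + ‖e‖ ^ 2 * ‖inner 𝕜 a b‖ := by
      gcongr
      exact norm_inner_le_norm r b
    _ = ‖e‖ ^ 2 * (‖a‖ * ‖b‖ + ‖inner 𝕜 a b‖) := by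
      rw [norm_two_mul_inner_smul_sub]
      ring

end Buzano

section SemiInner

variable {E : Type*} [NormedAddCommGroup E] [InnerProductSpace ℂ E]
  {A T S X Y P : E →L[ℂ] E} {x : E}

/-- The semi-inner product `⟨·, ·⟩_A` of a positive operator `A` as a pre-inner product; through it
the theory of semi-inner product spaces applies to `innA` and `vnormA`. -/
abbrev innACore (hA : A.IsPositive) : PreInnerProductSpace.Core ℂ E where
  inner := innA A
  conj_inner_symm x y := by
    rw [innA, innA, inner_conj_symm]
    exact (hA.isSymmetric x y).symm
  re_inner_nonneg := hA.re_inner_nonneg_left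
  add_left x y z := by simp only [innA, map_add, inner_add_left]
  smul_left x y c := by simp only [innA, map_smul, inner_smul_left]

theorem innA_conj_symm (hA : A.IsPositive) (x y : E) :
    starRingEnd ℂ (innA A y x) = innA A x y :=
  (innACore hA).conj_inner_symm x y

theorem vnormA_nonneg (A : E →L[ℂ] E) (x : E) : 0 ≤ vnormA A x :=
  Real.sqrt_nonneg _

theorem re_innA_self (hA : A.IsPositive) (x : E) : (innA A x x).re = vnormA A x ^ 2 :=
  (Real.sq_sqrt (hA.re_inner_nonneg_left x)).symm

theorem norm_innA_le (hA : A.IsPositive) (x y : E) :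
    ‖innA A x y‖ ≤ vnormA A x * vnormA A y :=
  @InnerProductSpace.Core.norm_inner_le_norm ℂ E _ _ _ (innACore hA) x y

theorem re_innA_le (hA : A.IsPositive) (x y : E) :
    (innA A x y).re ≤ vnormA A x * vnormA A y :=
  (Complex.re_le_norm _).trans (norm_innA_le hA x y)

theorem two_mul_norm_innA_mul_norm_innA_le (hA : A.IsPositive) (a b e : E) :
    2 * (‖innA A a e‖ * ‖innA A e b‖) ≤
      vnormA A e ^ 2 * (vnormA A a * vnormA A b + ‖innA A a b‖) :=
  @two_mul_norm_inner_mul_norm_inner_le ℂ E _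
    (@InnerProductSpace.Core.toSeminormedAddCommGroup ℂ E _ _ _ (innACore hA))
    (InnerProductSpace.ofCore (innACore hA)) a b e

theorem vnormA_le_sqrt_norm_mul_norm (A : E →L[ℂ] E) (x : E) :
    vnormA A x ≤ √‖A‖ * ‖x‖ := by
  refine Real.sqrt_le_iff.2 ⟨by positivity, ?_⟩
  calc (innA A x x).re ≤ ‖A x‖ * ‖x‖ := re_inner_le_norm (𝕜 := ℂ) (A x) x
    _ ≤ ‖A‖ * ‖x‖ * ‖x‖ := by
      gcongr
      exact A.le_opNorm x
    _ = (√‖A‖ * ‖x‖) ^ 2 := by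
      rw [mul_pow, Real.sq_sqrt (norm_nonneg A)]
      ring

/-- `X` is an adjoint of `T` for `⟨·, ·⟩_A`. When `A` is positive and `E` is complete this is the
equation `A X = T* A`; stated through the semi-inner product it also makes sense where `T` need not
have an adjoint `T*`. -/
def IsAAdjoint (A T X : E →L[ℂ] E) : Prop :=
  ∀ x y, innA A (T x) y = innA A x (X y)

namespace IsAAdjoint

theorem symm (hA : A.IsPositive) (hT : IsAAdjoint A T X) : IsAAdjoint A X T := fun x y => by
  rw [← innA_conj_symm hA, ← hT, innA_conj_symm hA]

theorem add (hT : IsAAdjoint A T X) (hS : IsAAdjoint A S Y) :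
    IsAAdjoint A (T + S) (X + Y) := fun x y => by
  have hTxy := hT x y
  have hSxy := hS x y
  simp only [innA] at hTxy hSxy
  simp only [innA, add_apply, map_add, inner_add_left, inner_add_right, hTxy, hSxy]

theorem mul (hT : IsAAdjoint A T X) (hS : IsAAdjoint A S Y) :
    IsAAdjoint A (T * S) (Y * X) := fun x y =>
  (hT (S x) y).trans (hS x (X y))

theorem pow (hT : IsAAdjoint A T X) (k : ℕ) : IsAAdjoint A (T ^ k) (X ^ k) := by
  induction k with
  | zero => exact fun _ _ => rfl
  | succ k ih => rw [pow_succ, pow_succ']; exact ih.mul hT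

theorem vnormA_apply_sq (hA : A.IsPositive) (hT : IsAAdjoint A T X) (x : E) :
    vnormA A (T x) ^ 2 = (innA A x ((X * T) x)).re := by
  rw [← re_innA_self hA, hT]
  rfl

theorem vnormA_apply_sq_le (hA : A.IsPositive) (hT : IsAAdjoint A T X) (x : E) :
    vnormA A (T x) ^ 2 ≤ vnormA A x * vnormA A ((X * T) x) :=
  (hT.vnormA_apply_sq hA x).trans_le (re_innA_le hA _ _)

/-- **Krein's theorem**. -/
theorem vnormA_apply_le_norm_mul (hA : A.IsPositive) (hP : IsAAdjoint A P P) (x : E) :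
    vnormA A (P x) ≤ ‖P‖ * vnormA A x := by
  rcases (vnormA_nonneg A x).eq_or_lt with hx | hx
  · have hPx : vnormA A (P x) ^ 2 ≤ 0 := by simpa [← hx] using hP.vnormA_apply_sq_le hA x
    rw [← hx, mul_zero]
    exact (sq_nonpos_iff _).1 hPx |>.le
  let b : ℕ → ℝ := fun k => vnormA A ((P ^ k) x) / vnormA A x
  have hsq (k : ℕ) : b k ^ 2 ≤ b (2 * k) := by
    have h := (hP.pow k).vnormA_apply_sq_le hA x
    rw [← pow_add, ← two_mul] at h
    calc (vnormA A ((P ^ k) x) / vnormA A x) ^ 2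
        = vnormA A ((P ^ k) x) ^ 2 / vnormA A x ^ 2 := div_pow _ _ 2
      _ ≤ vnormA A x * vnormA A ((P ^ (2 * k)) x) / vnormA A x ^ 2 := by gcongr
      _ = vnormA A ((P ^ (2 * k)) x) / vnormA A x := by field_simp
  have hgrowth (k : ℕ) : b k ≤ √‖A‖ * ‖x‖ / vnormA A x * ‖P‖ ^ k :=
    calc vnormA A ((P ^ k) x) / vnormA A x ≤ √‖A‖ * (‖P‖ ^ k * ‖x‖) / vnormA A x := by
          gcongr
          exact (vnormA_le_sqrt_norm_mul_norm A _).trans <|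
            mul_le_mul_of_nonneg_left (norm_pow_apply_le P k x) (Real.sqrt_nonneg _)
      _ = √‖A‖ * ‖x‖ / vnormA A x * ‖P‖ ^ k := by ring
  have hb1 : 0 ≤ b 1 := div_nonneg (vnormA_nonneg A _) hx.le
  have h := le_of_sq_le_of_le_const_mul_pow (norm_nonneg P) hb1 hsq hgrowth
  rwa [div_le_iff₀ hx, pow_one] at h

theorem vnormA_apply_le_sqrt_norm_mul (hA : A.IsPositive) (hT : IsAAdjoint A T X) (x : E) :
    vnormA A (T x) ≤ √‖X * T‖ * vnormA A x := by
  have hP : IsAAdjoint A (X * T) (X * T) := (hT.symm hA).mul hT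
  refine le_of_pow_le_pow_left₀ two_ne_zero
    (mul_nonneg (Real.sqrt_nonneg _) (vnormA_nonneg A x)) ?_
  calc vnormA A (T x) ^ 2 ≤ vnormA A x * vnormA A ((X * T) x) := hT.vnormA_apply_sq_le hA x
    _ ≤ vnormA A x * (‖X * T‖ * vnormA A x) :=
      mul_le_mul_of_nonneg_left (hP.vnormA_apply_le_norm_mul hA x) (vnormA_nonneg A x)
    _ = (√‖X * T‖ * vnormA A x) ^ 2 := by
      rw [mul_pow, Real.sq_sqrt (norm_nonneg _)]
      ring

theorem vnormA_apply_le_opNormA (hA : A.IsPositive) (hT : IsAAdjoint A T X)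
    (hx : vnormA A x = 1) : vnormA A (T x) ≤ opNormA A T := by
  refine le_csSup ⟨√‖X * T‖, ?_⟩ ⟨x, hx, rfl⟩
  rintro _ ⟨y, hy, rfl⟩
  simpa only [hy, mul_one] using hT.vnormA_apply_le_sqrt_norm_mul hA y

theorem norm_innA_apply_le_wA (hA : A.IsPositive) (hT : IsAAdjoint A T X)
    (hx : vnormA A x = 1) : ‖innA A (T x) x‖ ≤ wA A T := by
  refine le_csSup ⟨√‖X * T‖, ?_⟩ ⟨x, hx, rfl⟩
  rintro _ ⟨y, hy, rfl⟩
  simpa only [hy, mul_one] using (norm_innA_le hA _ _).trans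
    (mul_le_mul_of_nonneg_right (hT.vnormA_apply_le_sqrt_norm_mul hA y) (vnormA_nonneg A y))

theorem vnormA_sq_add_vnormA_sq_le (hA : A.IsPositive) (hT : IsAAdjoint A T X)
    (hS : IsAAdjoint A S Y) (x : E) :
    vnormA A (T x) ^ 2 + vnormA A (S x) ^ 2 ≤ vnormA A x * vnormA A ((X * T + Y * S) x) := by
  calc vnormA A (T x) ^ 2 + vnormA A (S x) ^ 2 = (innA A x ((X * T + Y * S) x)).re := by
        rw [hT.vnormA_apply_sq hA, hS.vnormA_apply_sq hA, ← Complex.add_re, innA, innA, innA,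
          ← inner_add_right, add_apply]
    _ ≤ vnormA A x * vnormA A ((X * T + Y * S) x) := re_innA_le hA _ _

theorem two_mul_norm_innA_apply_mul_norm_innA_apply_le (hA : A.IsPositive)
    (hT : IsAAdjoint A T X) (hS : IsAAdjoint A S Y) (hx : vnormA A x = 1) :
    2 * (‖innA A (T x) x‖ * ‖innA A (S x) x‖) ≤
      1 / 2 * vnormA A ((X * T + S * Y) x) + ‖innA A ((S * T) x) x‖ := by
  have hbuzano := two_mul_norm_innA_mul_norm_innA_le hA (T x) (Y x) x
  rw [hx, one_pow, one_mul, ← hS, ← hS] at hbuzano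
  have hamgm := two_mul_le_add_sq (vnormA A (T x)) (vnormA A (Y x))
  have hsum := hT.vnormA_sq_add_vnormA_sq_le hA (hS.symm hA) x
  rw [hx, one_mul] at hsum
  rw [mul_apply_eq_comp]
  linarith

end IsAAdjoint

end SemiInner

theorem IsReducedAAdjoint.isAAdjoint {A T X : H →L[ℂ] H} (hA : A.IsPositive)
    (hT : IsReducedAAdjoint A T X) : IsAAdjoint A T X := by
  refine IsAAdjoint.symm hA fun x y => ?_
  rw [innA, innA, ← adjoint_inner_left]
  exact congrArg (inner ℂ · y) (DFunLike.congr_fun hT.1 x)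

theorem stmt9_general {E : Type*} [NormedAddCommGroup E] [InnerProductSpace ℂ E]
    {A T S X Y : E →L[ℂ] E} (hA : A.IsPositive) (hT : IsAAdjoint A T X) (hS : IsAAdjoint A S Y) :
    wA A (T + S) ≤
      √(wA A T ^ 2 + wA A S ^ 2 + (1 / 2) * opNormA A (X * T + S * Y) + wA A (S * T)) := by
  refine Real.sSup_le ?_ (Real.sqrt_nonneg _)
  rintro _ ⟨x, hx, rfl⟩
  have hP : IsAAdjoint A (X * T + S * Y) (X * T + S * Y) :=
    ((hT.symm hA).mul hT).add (hS.mul (hS.symm hA))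
  have htri : ‖innA A ((T + S) x) x‖ ≤ ‖innA A (T x) x‖ + ‖innA A (S x) x‖ := by
    simp only [innA, add_apply, map_add, inner_add_left]
    exact norm_add_le _ _
  apply Real.le_sqrt_of_sq_le
  calc ‖innA A ((T + S) x) x‖ ^ 2 ≤ (‖innA A (T x) x‖ + ‖innA A (S x) x‖) ^ 2 := by gcongr
    _ = ‖innA A (T x) x‖ ^ 2 + ‖innA A (S x) x‖ ^ 2 +
        2 * (‖innA A (T x) x‖ * ‖innA A (S x) x‖) := by ring
    _ ≤ ‖innA A (T x) x‖ ^ 2 + ‖innA A (S x) x‖ ^ 2 +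
        (1 / 2 * vnormA A ((X * T + S * Y) x) + ‖innA A ((S * T) x) x‖) := by
      gcongr
      exact hT.two_mul_norm_innA_apply_mul_norm_innA_apply_le hA hS hx
    _ ≤ wA A T ^ 2 + wA A S ^ 2 +
        ((1 / 2) * opNormA A (X * T + S * Y) + wA A (S * T)) := by
      gcongr
      exacts [hT.norm_innA_apply_le_wA hA hx, hS.norm_innA_apply_le_wA hA hx,
        hP.vnormA_apply_le_opNormA hA hx, (hS.mul hT).norm_innA_apply_le_wA hA hx]
    _ = wA A T ^ 2 + wA A S ^ 2 + (1 / 2) * opNormA A (X * T + S * Y) + wA A (S * T) := by ring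

theorem stmt9 (A : H →L[ℂ] H) (hA : A.IsPositive) (hA0 : A ≠ 0)
    (T S Tsharp Ssharp : H →L[ℂ] H)
    (hT : IsReducedAAdjoint A T Tsharp) (hS : IsReducedAAdjoint A S Ssharp) :
    wA A (T + S) ≤
      Real.sqrt (wA A T ^ 2 + wA A S ^ 2 +
        (1 / 2) * opNormA A (Tsharp * T + S * Ssharp) + wA A (S * T)) :=
  stmt9_general hA (hT.isAAdjoint hA) (hS.isAAdjoint hA)
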